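/- arXiv:math/0501250 — 3 statements merged into one kernel-verified Lean document; each statement's English description precedes it below -/
import Mathlib

section
/- Let φ: f → g and ψ: g → h be morphisms in the category Arrows of maps of simplicial sets. Assume that ψ is a push-out and that f, g, and h are monomorphisms of simplicial sets. Then the composite ψ∘φ is a push-out if and only if φ is a push-out. -/
open CategoryTheory CategoryTheory.Limits

/-!
One direction is the pasting law for pushouts. For the other, pushouts in `SSet` are computed
degreewise, so the claim reduces to sets. There, a commutative square whose vertical maps are
injective is a pushout exactly when its bottom map restricts to a bijection between the complements
of the images of the vertical maps, and such bijections satisfy two-out-of-three: the bottom map of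
the left square sends the complement into the complement because the composite does.

`isPushout_compl` extracts the behaviour on complements from a pushout of sets, and
`isPushout_left_of_types` is the set-level cancellation statement.
-/

universe u

/-- In a pushout square of sets, the bottom map is injective on the complement of the range of
the left map, and sends it to the complement of the range of the right map. -/
lemma isPushout_compl {X₁ X₂ X₃ X₄ : Type u} {t : X₁ ⟶ X₂} {l : X₁ ⟶ X₃} {r : X₂ ⟶ X₄}
    {b : X₃ ⟶ X₄} (h : IsPushout t l r b) (x : X₃) (hx : x ∉ Set.range l) :
    b x ∉ Set.range r ∧ ∀ y, y ∉ Set.range l → b x = b y → x = y := by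
  classical
  -- The test cocone collapses `X₂` and the range of `l` to a single point `none`.
  let p : X₂ ⟶ Option X₃ := ↾fun _ ↦ none
  let q : X₃ ⟶ Option X₃ := ↾fun z ↦ if z ∈ Set.range l then none else some z
  have w : t ≫ p = l ≫ q :=
    ConcreteCategory.hom_ext _ _ fun z ↦ (if_pos (Set.mem_range_self z)).symm
  have hp (z : X₂) : h.desc p q w (r z) = none :=
    ConcreteCategory.congr_hom (h.inl_desc p q w) z
  have hq (z : X₃) (hz : z ∉ Set.range l) : h.desc p q w (b z) = some z :=
    (ConcreteCategory.congr_hom (h.inr_desc p q w) z).trans (if_neg hz)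
  refine ⟨?_, fun y hy e ↦ ?_⟩
  · rintro ⟨z, hz⟩
    have h₁ := hp z
    rw [hz, hq x hx] at h₁
    exact absurd h₁ (by simp)
  · have h₁ := hq x hx
    rw [e, hq y hy] at h₁
    exact (Option.some.inj h₁).symm

/-- Left cancellation for horizontally pasted pushout squares of sets with injective vertical
maps. -/
lemma isPushout_left_of_types {X₁ X₂ X₃ Y₁ Y₂ Y₃ : Type u} {t : X₁ ⟶ X₂} {t' : X₂ ⟶ X₃}
    {b : Y₁ ⟶ Y₂} {b' : Y₂ ⟶ Y₃} {v₁ : X₁ ⟶ Y₁} {v₂ : X₂ ⟶ Y₂} {v₃ : X₃ ⟶ Y₃}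
    (hv₁ : Function.Injective v₁) (hv₂ : Function.Injective v₂)
    (w : t ≫ v₂ = v₁ ≫ b) (hr : IsPushout t' v₂ v₃ b')
    (ho : IsPushout (t ≫ t') v₁ v₃ (b ≫ b')) : IsPushout t v₁ v₂ b := by
  have pr : IsPullback t' v₂ v₃ b' := (Types.isPullback_of_isPushout hr.flip hv₂).flip
  have po : IsPullback (t ≫ t') v₁ v₃ (b ≫ b') :=
    (Types.isPullback_of_isPushout ho.flip hv₁).flip
  have : Mono v₂ := (mono_iff_injective v₂).2 hv₂
  refine Types.isPushout_of_isPullback_of_mono' (IsPullback.of_right po w pr) ?_ ?_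
  · refine Set.eq_univ_of_forall fun y ↦ ?_
    by_cases hy : y ∈ Set.range v₂
    · exact Or.inl hy
    · obtain ⟨hy₁, hy₂⟩ := isPushout_compl hr y hy
      obtain ⟨x, hx⟩ | ⟨z, hz, -⟩ := Types.eq_or_eq_of_isPushout' ho (b' y)
      · exact absurd ⟨x, hx⟩ hy₁
      · refine Or.inr ⟨z, (hy₂ (b z) ?_ hz.symm).symm⟩
        -- A preimage of `b z` in `X₂` would put `b' y = b' (b z)` in the range of `v₃`.
        rintro ⟨s, hs⟩
        refine hy₁ ⟨t' s, ?_⟩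
        have h₁ : v₃ (t' s) = b' (v₂ s) := ConcreteCategory.congr_hom hr.w s
        rw [h₁, hs]
        exact hz
  · intro x y hx hy e
    exact (isPushout_compl ho x hx).2 y hy (congrArg b' e)

lemma injective_app {A B : SSet.{u}} (i : A ⟶ B) (hi : Mono i) (n : SimplexCategoryᵒᵖ) :
    Function.Injective (i.app n) :=
  (mono_iff_injective _).1 ((NatTrans.mono_iff_mono_app i).1 hi n)

/-- Let `φ : f ⟶ g` and `ψ : g ⟶ h` be morphisms in the category `Arrow SSet`
of maps of simplicial sets.  Assume that `ψ` is a push-out (its commutative square of simplicial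
sets is a pushout square) and that `f`, `g` and `h` are monomorphisms of simplicial sets.
Then the composite `ψ ∘ φ` is a push-out if and only if `φ` is a push-out. -/
theorem arrows_pushout_two_out_of_three_mono
    {f g h : Arrow SSet} (φ : f ⟶ g) (ψ : g ⟶ h)
    (hψ : IsPushout ψ.left g.hom h.hom ψ.right)
    (hf : Mono f.hom) (hg : Mono g.hom) (hh : Mono h.hom) :
    IsPushout (φ ≫ ψ).left f.hom h.hom (φ ≫ ψ).right ↔
      IsPushout φ.left f.hom g.hom φ.right := by
  refine ⟨fun ho ↦ ?_, fun hφ ↦ hφ.paste_horiz hψ⟩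
  refine IsPushout.of_forall_isPushout_app fun n ↦ ?_
  exact isPushout_left_of_types (injective_app _ hf n) (injective_app _ hg n)
    (NatTrans.congr_app φ.w n) (hψ.app n) (ho.app n)
end

section
/- (Cube lemma, pushout version.) Consider a commutative square in Arrows with morphisms φ: f → g, π: f → h, ψ: h → k, μ: g → k satisfying μ∘φ = ψ∘π. Assume that all four morphisms φ, ψ, π, and μ are pull-backs. Then this square is a pushout square in Arrows if and only if the range-level square of simplicial sets, with maps Rφ: Rf → Rg, Rπ: Rf → Rh, Rψ: Rh → Rk, Rμ: Rg → Rk, is a pushout square of simplicial sets. -/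
open CategoryTheory CategoryTheory.Limits

/-!
Pushouts of simplicial sets are universal: they are stable under base change. Both pushouts and
pullbacks of simplicial sets are computed degreewise, so this reduces to sets
(`isPushout_left_of_cube`). There, the pushout property of the range square is applied to maps
into the powerset of `DK × Z`, where a point of the base is sent to the graph of the desired map
on the fibre over it; the cartesian faces make these graphs functional.

Colimits in the arrow category are computed on domains and ranges separately, so the range square
of a pushout is a pushout, and conversely a pushout of ranges, together with the pushout of
domains obtained by universality, gives a pushout of arrows (`isPushout_arrow`).
-/

/-- Universality of pushouts of sets, in cube form: the lower face `R` is a pushout, the upper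
face `D` lies over it, and the vertical faces over `F → G`, `H → K`, `G → K` are cartesian. -/
lemma isPushout_left_of_cube.{u} {DF DG DH DK RF RG RH RK : Type u}
    {f : DF ⟶ RF} {g : DG ⟶ RG} {h : DH ⟶ RH} {k : DK ⟶ RK}
    {φ : DF ⟶ DG} {π : DF ⟶ DH} {μ : DG ⟶ DK} {ψ : DH ⟶ DK}
    {φ' : RF ⟶ RG} {π' : RF ⟶ RH} {μ' : RG ⟶ RK} {ψ' : RH ⟶ RK}
    (w : φ ≫ μ = π ≫ ψ) (hπ : π ≫ h = f ≫ π')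
    (hφ : IsPullback φ f g φ') (hψ : IsPullback ψ h k ψ') (hμ : IsPullback μ g k μ')
    (H : IsPushout φ' π' μ' ψ') : IsPushout φ π μ ψ := by
  have w' : ∀ x, μ (φ x) = ψ (π x) := fun x ↦ ConcreteCategory.congr_hom w x
  have hπ' : ∀ x, h (π x) = π' (f x) := fun x ↦ ConcreteCategory.congr_hom hπ x
  have hφ' : ∀ x, g (φ x) = φ' (f x) := fun x ↦ ConcreteCategory.congr_hom hφ.w x
  have hψ' : ∀ x, k (ψ x) = ψ' (h x) := fun x ↦ ConcreteCategory.congr_hom hψ.w x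
  have hμ' : ∀ x, k (μ x) = μ' (g x) := fun x ↦ ConcreteCategory.congr_hom hμ.w x
  have H' : ∀ x, μ' (φ' x) = ψ' (π' x) := fun x ↦ ConcreteCategory.congr_hom H.w x
  have surj : ∀ y : DK, (∃ x, μ x = y) ∨ ∃ x, ψ x = y := by
    intro y
    rcases Types.eq_or_eq_of_isPushout H (k y) with ⟨x, hx⟩ | ⟨x, hx⟩
    · obtain ⟨z, hz, -⟩ := Types.exists_of_isPullback hμ y x hx.symm
      exact Or.inl ⟨z, hz⟩
    · obtain ⟨z, hz, -⟩ := Types.exists_of_isPullback hψ y x hx.symm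
      exact Or.inr ⟨z, hz⟩
  have key : ∀ {Z : Type u} (a : DG ⟶ Z) (b : DH ⟶ Z), φ ≫ a = π ≫ b →
      ∃ l : DK ⟶ Z, μ ≫ l = a ∧ ψ ≫ l = b := by
    intro Z a b hab
    have hab' : ∀ x, a (φ x) = b (π x) := fun x ↦ ConcreteCategory.congr_hom hab x
    -- The graph of the desired map on the fibre over a point of `RG`, respectively `RH`.
    let A : RG ⟶ Set (DK × Z) := ↾fun x ↦ {p | ∃ y, g y = x ∧ μ y = p.1 ∧ a y = p.2}
    let B : RH ⟶ Set (DK × Z) := ↾fun x ↦ {p | ∃ y, h y = x ∧ ψ y = p.1 ∧ b y = p.2}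
    have hAB : φ' ≫ A = π' ≫ B := by
      ext x ⟨q, z⟩
      constructor
      · rintro ⟨y, hy, rfl, rfl⟩
        obtain ⟨e, rfl, rfl⟩ := Types.exists_of_isPullback hφ y x hy
        exact ⟨π e, hπ' e, (w' e).symm, (hab' e).symm⟩
      · rintro ⟨y, hy, rfl, rfl⟩
        obtain ⟨t, ht, htx⟩ := Types.exists_of_isPullback hμ (ψ y) (φ' x)
          (by rw [hψ', H', hy]; rfl)
        obtain ⟨e, rfl, rfl⟩ := Types.exists_of_isPullback hφ t x htx
        have hy' : π e = y := Types.ext_of_isPullback hψ ((w' e).symm.trans ht)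
          ((hπ' e).trans hy.symm)
        exact ⟨φ e, hφ' e, ht, by rw [hab', hy']⟩
    let G := H.desc A B hAB
    have hA : ∀ x, G (μ' x) = A x := fun x ↦ ConcreteCategory.congr_hom (H.inl_desc A B hAB) x
    have hB : ∀ x, G (ψ' x) = B x := fun x ↦ ConcreteCategory.congr_hom (H.inr_desc A B hAB) x
    have memA : ∀ y z, ((μ y, z) : DK × Z) ∈ (G (k (μ y)) : Set (DK × Z)) ↔ z = a y := by
      intro y z
      rw [hμ', hA]
      constructor
      · rintro ⟨y', h1, h2, rfl⟩
        rw [Types.ext_of_isPullback hμ h2 h1]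
      · rintro rfl
        exact ⟨y, rfl, rfl, rfl⟩
    have memB : ∀ y z, ((ψ y, z) : DK × Z) ∈ (G (k (ψ y)) : Set (DK × Z)) ↔ z = b y := by
      intro y z
      rw [hψ', hB]
      constructor
      · rintro ⟨y', h1, h2, rfl⟩
        rw [Types.ext_of_isPullback hψ h2 h1]
      · rintro rfl
        exact ⟨y, rfl, rfl, rfl⟩
    have ex : ∀ q : DK, ∃ z : Z, (q, z) ∈ (G (k q) : Set (DK × Z)) := by
      intro q
      rcases surj q with ⟨y, rfl⟩ | ⟨y, rfl⟩
      · exact ⟨a y, (memA y _).2 rfl⟩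
      · exact ⟨b y, (memB y _).2 rfl⟩
    choose l hl using ex
    refine ⟨↾l, ?_, ?_⟩
    · ext y
      exact (memA y _).1 (hl _)
    · ext y
      exact (memB y _).1 (hl _)
  refine ⟨⟨w⟩, ⟨PushoutCocone.IsColimit.mk w (fun s ↦ (key s.inl s.inr s.condition).choose)
    (fun s ↦ (key s.inl s.inr s.condition).choose_spec.1)
    (fun s ↦ (key s.inl s.inr s.condition).choose_spec.2) ?_⟩⟩
  intro s m hm₁ hm₂
  obtain ⟨h₁, h₂⟩ := (key s.inl s.inr s.condition).choose_spec
  ext q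
  rcases surj q with ⟨y, rfl⟩ | ⟨y, rfl⟩
  · exact ConcreteCategory.congr_hom (hm₁.trans h₁.symm) y
  · exact ConcreteCategory.congr_hom (hm₂.trans h₂.symm) y

/-- A square of arrows that is a pushout on domains and on ranges is a pushout. -/
lemma isPushout_arrow {C : Type*} [Category* C] {f g h k : Arrow C}
    {φ : f ⟶ g} {π : f ⟶ h} {μ : g ⟶ k} {ψ : h ⟶ k}
    (hl : IsPushout φ.left π.left μ.left ψ.left)
    (hr : IsPushout φ.right π.right μ.right ψ.right) : IsPushout φ π μ ψ := by
  have w : φ ≫ μ = π ≫ ψ := by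
    ext
    · exact hl.w
    · exact hr.w
  have wl {X : Arrow C} {a : g ⟶ X} {b : h ⟶ X} (e : φ ≫ a = π ≫ b) :
      φ.left ≫ a.left = π.left ≫ b.left := congrArg CommaMorphism.left e
  have wr {X : Arrow C} {a : g ⟶ X} {b : h ⟶ X} (e : φ ≫ a = π ≫ b) :
      φ.right ≫ a.right = π.right ≫ b.right := congrArg CommaMorphism.right e
  refine ⟨⟨w⟩, ⟨PushoutCocone.IsColimit.mk w
    (fun s ↦ Arrow.homMk (hl.desc s.inl.left s.inr.left (wl s.condition))
      (hr.desc s.inl.right s.inr.right (wr s.condition)) ?_) ?_ ?_ ?_⟩⟩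
  · apply hl.hom_ext
    · rw [hl.inl_desc_assoc, Arrow.w, Arrow.w_assoc, hr.inl_desc]
    · rw [hl.inr_desc_assoc, Arrow.w, Arrow.w_assoc, hr.inr_desc]
  · intro s
    ext
    · exact hl.inl_desc _ _ _
    · exact hr.inl_desc _ _ _
  · intro s
    ext
    · exact hl.inr_desc _ _ _
    · exact hr.inr_desc _ _ _
  · intro s m h₁ h₂
    ext
    · apply hl.hom_ext
      · exact (congrArg CommaMorphism.left h₁).trans (hl.inl_desc _ _ _).symm
      · exact (congrArg CommaMorphism.left h₂).trans (hl.inr_desc _ _ _).symm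
    · apply hr.hom_ext
      · exact (congrArg CommaMorphism.right h₁).trans (hr.inl_desc _ _ _).symm
      · exact (congrArg CommaMorphism.right h₂).trans (hr.inr_desc _ _ _).symm

/-- cube lemma, pushout version.  Consider a commutative square in
`Arrow SSet` with morphisms `φ : f ⟶ g`, `π : f ⟶ h`, `ψ : h ⟶ k`, `μ : g ⟶ k` satisfying
`μ ∘ φ = ψ ∘ π`.  Assume that all four morphisms `φ`, `ψ`, `π`, `μ` are pull-backs (their own
commutative squares of simplicial sets are pullback squares).  Then this square is a pushout
square in the arrow category if and only if the range-level square, with maps `Rφ`, `Rπ`,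
`Rψ`, `Rμ`, is a pushout square of simplicial sets. -/
theorem arrows_cube_lemma_pushout
    {f g h k : Arrow SSet} (φ : f ⟶ g) (π : f ⟶ h) (ψ : h ⟶ k) (μ : g ⟶ k)
    (hcomm : φ ≫ μ = π ≫ ψ)
    (hφ : IsPullback φ.left f.hom g.hom φ.right)
    (hψ : IsPullback ψ.left h.hom k.hom ψ.right)
    (hπ : IsPullback π.left f.hom h.hom π.right)
    (hμ : IsPullback μ.left g.hom k.hom μ.right) :
    IsPushout φ π μ ψ ↔ IsPushout φ.right π.right μ.right ψ.right := by
  refine ⟨fun H ↦ H.map Arrow.rightFunc, fun H ↦ isPushout_arrow ?_ H⟩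
  refine IsPushout.of_forall_isPushout_app fun n ↦ ?_
  exact isPushout_left_of_cube
    (congrArg (fun t ↦ t.left.app n) hcomm) (congrArg (fun t ↦ t.app n) hπ.w)
    (hφ.app n) (hψ.app n) (hμ.app n) (H.app n)
end

section
/- (Hypercube lemma.) Consider a commutative cube in the arrow category Arrows of simplicial sets, with top face consisting of objects f̄, ḡ, h̄, k̄ and morphisms f̄ → ḡ, f̄ → h̄, ḡ → k̄, h̄ → k̄, bottom face consisting of objects f, g, h, k and morphisms f → g, f → h, g → k, h → k, and vertical morphisms f̄ → f, ḡ → g, h̄ → h, k̄ → k making all faces commute. Assume that the four vertical side faces (f̄, h̄, f, h), (f̄, ḡ, f, g), (h̄, k̄, h, k), and (ḡ, k̄, g, k) are pullback squares in Arrows and that the bottom face (f, h, g, k) is a pushout square in Arrows. Then the top face (f̄, h̄, ḡ, k̄) is a pushout square in Arrows. -/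
/-!
Pullbacks and pushouts of arrows are computed separately on domains and ranges, and those of
simplicial sets are computed degreewise, so the claim reduces to the stability of pushouts under
base change in the category of sets (`isPushout_of_isPullback_type`). There, the map out of the
top corner `K'` induced by `s` and `t` is built from the pushout `K` below it: each point `y : K`
is assigned the graph of the desired map on the fiber over `y`. This assignment is induced by the
analogous ones on `G` and `H`, which agree on `F` because the side faces over `F` are pullbacks.
-/

open CategoryTheory CategoryTheory.Limits

universe u

/-- Pushouts in `Type u` are stable under base change. The map out of `K'` is obtained by applying
the universal property of `K` to maps into `Set (K' × X)`: a point `y : K` is sent to the graph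
of the desired map restricted to the fiber of `d` over `y`. -/
theorem isPushout_of_isPullback_type
    {F' G' H' K' F G H K : Type u}
    {φ' : F' ⟶ G'} {π' : F' ⟶ H'} {μ' : G' ⟶ K'} {ψ' : H' ⟶ K'}
    {φ : F ⟶ G} {π : F ⟶ H} {μ : G ⟶ K} {ψ : H ⟶ K}
    {a : F' ⟶ F} {b : G' ⟶ G} {c : H' ⟶ H} {d : K' ⟶ K}
    (htop : φ' ≫ μ' = π' ≫ ψ')
    (hfh : IsPullback π' a c π) (hfg : IsPullback φ' a b φ)
    (hhk : IsPullback ψ' c d ψ) (hgk : IsPullback μ' b d μ)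
    (hbot : IsPushout φ π μ ψ) :
    IsPushout φ' π' μ' ψ' := by
  have etop (q : F') : μ' (φ' q) = ψ' (π' q) := ConcreteCategory.congr_hom htop q
  have efh (q : F') : c (π' q) = π (a q) := ConcreteCategory.congr_hom hfh.w q
  have efg (q : F') : b (φ' q) = φ (a q) := ConcreteCategory.congr_hom hfg.w q
  have ehk (q : H') : d (ψ' q) = ψ (c q) := ConcreteCategory.congr_hom hhk.w q
  have egk (q : G') : d (μ' q) = μ (b q) := ConcreteCategory.congr_hom hgk.w q
  have surj (z : K') : (∃ p, μ' p = z) ∨ ∃ p, ψ' p = z := by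
    rcases Types.eq_or_eq_of_isPushout hbot (d z) with ⟨x, hx⟩ | ⟨x, hx⟩
    · obtain ⟨p, hp, -⟩ := Types.exists_of_isPullback hgk z x hx.symm
      exact Or.inl ⟨p, hp⟩
    · obtain ⟨p, hp, -⟩ := Types.exists_of_isPullback hhk z x hx.symm
      exact Or.inr ⟨p, hp⟩
  have desc {X : Type u} (s : G' ⟶ X) (t : H' ⟶ X) (hst : φ' ≫ s = π' ≫ t) :
      ∃ l : K' ⟶ X, μ' ≫ l = s ∧ ψ' ≫ l = t := by
    have est (q : F') : s (φ' q) = t (π' q) := ConcreteCategory.congr_hom hst q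
    let S : G ⟶ Set (K' × X) := TypeCat.ofHom fun x ↦ {y | ∃ p, b p = x ∧ μ' p = y.1 ∧ s p = y.2}
    let T : H ⟶ Set (K' × X) := TypeCat.ofHom fun x ↦ {y | ∃ p, c p = x ∧ ψ' p = y.1 ∧ t p = y.2}
    have hST : φ ≫ S = π ≫ T := by
      ext w ⟨z, v⟩
      change (∃ p, b p = φ w ∧ μ' p = z ∧ s p = v) ↔ (∃ p, c p = π w ∧ ψ' p = z ∧ t p = v)
      constructor
      · rintro ⟨p, hp, rfl, rfl⟩
        obtain ⟨q, rfl, rfl⟩ := Types.exists_of_isPullback hfg p w hp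
        exact ⟨π' q, efh q, (etop q).symm, (est q).symm⟩
      · rintro ⟨p, hp, rfl, rfl⟩
        obtain ⟨q, rfl, rfl⟩ := Types.exists_of_isPullback hfh p w hp
        exact ⟨φ' q, efg q, etop q, est q⟩
    let Φ : K ⟶ Set (K' × X) := hbot.desc S T hST
    have hS (p : G') (v : X) : (μ' p, v) ∈ Φ (d (μ' p)) ↔ v = s p := by
      have h : Φ (μ (b p)) = S (b p) := ConcreteCategory.congr_hom (hbot.inl_desc S T hST) (b p)
      rw [egk, h]
      change (∃ p', b p' = b p ∧ μ' p' = μ' p ∧ s p' = v) ↔ v = s p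
      constructor
      · rintro ⟨p', h₁, h₂, rfl⟩
        rw [Types.ext_of_isPullback hgk h₂ h₁]
      · rintro rfl
        exact ⟨p, rfl, rfl, rfl⟩
    have hT (p : H') (v : X) : (ψ' p, v) ∈ Φ (d (ψ' p)) ↔ v = t p := by
      have h : Φ (ψ (c p)) = T (c p) := ConcreteCategory.congr_hom (hbot.inr_desc S T hST) (c p)
      rw [ehk, h]
      change (∃ p', c p' = c p ∧ ψ' p' = ψ' p ∧ t p' = v) ↔ v = t p
      constructor
      · rintro ⟨p', h₁, h₂, rfl⟩
        rw [Types.ext_of_isPullback hhk h₂ h₁]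
      · rintro rfl
        exact ⟨p, rfl, rfl, rfl⟩
    have hex (z : K') : ∃ v, (z, v) ∈ Φ (d z) := by
      rcases surj z with ⟨p, rfl⟩ | ⟨p, rfl⟩
      · exact ⟨_, (hS p _).2 rfl⟩
      · exact ⟨_, (hT p _).2 rfl⟩
    choose l hl using hex
    refine ⟨TypeCat.ofHom l, ?_, ?_⟩
    · ext p
      exact (hS p _).1 (hl _)
    · ext p
      exact (hT p _).1 (hl _)
  refine ⟨⟨htop⟩, ⟨PushoutCocone.IsColimit.mk htop
    (fun s ↦ (desc s.inl s.inr s.condition).choose)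
    (fun s ↦ (desc s.inl s.inr s.condition).choose_spec.1)
    (fun s ↦ (desc s.inl s.inr s.condition).choose_spec.2) ?_⟩⟩
  intro s m h₁ h₂
  have h := (desc s.inl s.inr s.condition).choose_spec
  ext z
  rcases surj z with ⟨p, rfl⟩ | ⟨p, rfl⟩
  · exact ConcreteCategory.congr_hom (h₁.trans h.1.symm) p
  · exact ConcreteCategory.congr_hom (h₂.trans h.2.symm) p

/-- Pushouts of simplicial sets are stable under base change, since pullbacks and pushouts are
computed in each simplicial degree. -/
theorem isPushout_of_isPullback_sSet
    {F' G' H' K' F G H K : SSet.{u}}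
    {φ' : F' ⟶ G'} {π' : F' ⟶ H'} {μ' : G' ⟶ K'} {ψ' : H' ⟶ K'}
    {φ : F ⟶ G} {π : F ⟶ H} {μ : G ⟶ K} {ψ : H ⟶ K}
    {a : F' ⟶ F} {b : G' ⟶ G} {c : H' ⟶ H} {d : K' ⟶ K}
    (htop : φ' ≫ μ' = π' ≫ ψ')
    (hfh : IsPullback π' a c π) (hfg : IsPullback φ' a b φ)
    (hhk : IsPullback ψ' c d ψ) (hgk : IsPullback μ' b d μ)
    (hbot : IsPushout φ π μ ψ) :
    IsPushout φ' π' μ' ψ' where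
  w := htop
  isColimit' := ⟨evaluationJointlyReflectsColimits _ fun n ↦
    (isColimitMapCoconePushoutCoconeEquiv _ _).2 (IsPushout.isColimit
      (isPushout_of_isPullback_type
        (by rw [← Functor.map_comp, htop, Functor.map_comp])
        (hfh.map ((evaluation _ _).obj n)) (hfg.map ((evaluation _ _).obj n))
        (hhk.map ((evaluation _ _).obj n)) (hgk.map ((evaluation _ _).obj n))
        (hbot.map ((evaluation _ _).obj n))))⟩

section Arrow

variable {C : Type*} [Category* C]

theorem arrow_isPullback_map [HasPullbacks C] {X Y Z W : Arrow C}
    {f : X ⟶ Y} {g : X ⟶ Z} {h : Y ⟶ W} {k : Z ⟶ W} (sq : IsPullback f g h k) :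
    IsPullback f.left g.left h.left k.left ∧ IsPullback f.right g.right h.right k.right := by
  have : PreservesLimit (cospan h k) (Arrow.leftFunc : Arrow C ⥤ C) :=
    preservesLimit_of_preserves_limit_cone
      (Comma.coneOfPreservesIsLimit _ (limit.isLimit _) (limit.isLimit _)) (limit.isLimit _)
  have : PreservesLimit (cospan h k) (Arrow.rightFunc : Arrow C ⥤ C) :=
    preservesLimit_of_preserves_limit_cone
      (Comma.coneOfPreservesIsLimit _ (limit.isLimit _) (limit.isLimit _)) (limit.isLimit _)
  exact ⟨sq.map Arrow.leftFunc, sq.map Arrow.rightFunc⟩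

theorem arrow_isPushout_iff [HasPushouts C] {X Y Z W : Arrow C}
    {f : X ⟶ Y} {g : X ⟶ Z} {h : Y ⟶ W} {k : Z ⟶ W} :
    IsPushout f g h k ↔
      IsPushout f.left g.left h.left k.left ∧ IsPushout f.right g.right h.right k.right := by
  constructor
  · intro sq
    exact ⟨sq.map Arrow.leftFunc, sq.map Arrow.rightFunc⟩
  · rintro ⟨sq₁, sq₂⟩
    have w : f ≫ h = g ≫ k := by
      ext
      · exact sq₁.w
      · exact sq₂.w
    exact ⟨⟨w⟩, ⟨Comma.fstSndJointlyReflectColimit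
      ((isColimitMapCoconePushoutCoconeEquiv (Comma.fst (𝟭 C) (𝟭 C)) _).2 sq₁.isColimit)
      ((isColimitMapCoconePushoutCoconeEquiv (Comma.snd (𝟭 C) (𝟭 C)) _).2 sq₂.isColimit)⟩⟩

end Arrow


/-- hypercube lemma.  Consider a commutative cube in the arrow category of
simplicial sets, with top face `(f̄, ḡ, h̄, k̄)`, bottom face `(f, g, h, k)` and vertical
morphisms `a, b, c, d`.  Assume that the four vertical side faces `(f̄, h̄, f, h)`,
`(f̄, ḡ, f, g)`, `(h̄, k̄, h, k)`, `(ḡ, k̄, g, k)` are pullback squares in the arrow category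
and that the bottom face `(f, h, g, k)` is a pushout square in the arrow category.  Then the
top face `(f̄, h̄, ḡ, k̄)` is a pushout square in the arrow category. -/
theorem arrows_hypercube_lemma
    {f' g' h' k' f g h k : Arrow SSet}
    (φ' : f' ⟶ g') (π' : f' ⟶ h') (μ' : g' ⟶ k') (ψ' : h' ⟶ k')
    (φ : f ⟶ g) (π : f ⟶ h) (μ : g ⟶ k) (ψ : h ⟶ k)
    (a : f' ⟶ f) (b : g' ⟶ g) (c : h' ⟶ h) (d : k' ⟶ k)
    (htop : φ' ≫ μ' = π' ≫ ψ')
    (hfh : IsPullback π' a c π)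
    (hfg : IsPullback φ' a b φ)
    (hhk : IsPullback ψ' c d ψ)
    (hgk : IsPullback μ' b d μ)
    (hbot : IsPushout φ π μ ψ) :
    IsPushout φ' π' μ' ψ' := by
  obtain ⟨hfh₁, hfh₂⟩ := arrow_isPullback_map hfh
  obtain ⟨hfg₁, hfg₂⟩ := arrow_isPullback_map hfg
  obtain ⟨hhk₁, hhk₂⟩ := arrow_isPullback_map hhk
  obtain ⟨hgk₁, hgk₂⟩ := arrow_isPullback_map hgk
  obtain ⟨hbot₁, hbot₂⟩ := arrow_isPushout_iff.1 hbot
  exact arrow_isPushout_iff.2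
    ⟨isPushout_of_isPullback_sSet (congrArg CommaMorphism.left htop) hfh₁ hfg₁ hhk₁ hgk₁ hbot₁,
      isPushout_of_isPullback_sSet (congrArg CommaMorphism.right htop) hfh₂ hfg₂ hhk₂ hgk₂ hbot₂⟩
end
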